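/- Let R be a ring. If M and N are pure-injective left R-modules and there exist pure embeddings f : M → N and g : N → M, then M and N are isomorphic as R-modules. -/

import Mathlib

open Cardinal

universe u v

def IsPureMap (R : Type u) [Ring R] {M N : Type v}
    [AddCommGroup M] [Module R M] [AddCommGroup N] [Module R N]
    (f : M →ₗ[R] N) : Prop :=
  ∀ (m k : ℕ) (a : Fin m → Fin k → R) (b : Fin m → M),
    (∃ x : Fin k → N, ∀ i, ∑ j, a i j • x j = f (b i)) →
    (∃ x : Fin k → M, ∀ i, ∑ j, a i j • x j = b i)

def PureInjective (R : Type u) [Ring R] (M : Type v) [AddCommGroup M] [Module R M] : Prop :=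
  ∀ (N : Type v) [AddCommGroup N] [Module R N], ∀ f : M →ₗ[R] N,
    Function.Injective f → IsPureMap R f → ∃ g : N →ₗ[R] M, g ∘ₗ f = LinearMap.id

/-!
If `N` is pure-injective, every map `φ : A → N` lands in a direct summand `E` of `N` such that
`A → E` is left minimal: every endomorphism of `E` fixing it is an automorphism. Such an `E` is
determined by `φ` up to isomorphism. It is the image of an idempotent produced by Zorn's lemma,
chains being bounded because families of endomorphisms of `N` have limits, obtained by retracting a
reduced power of `N` onto `N`.

After splitting the two embeddings, `M ≅ Y × N` is a summand of `N`, say through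
`i : Y × N → N`. As in the set-theoretic Cantor–Bernstein theorem, the Knaster–Tarski theorem gives
a submodule `S ≤ N` with `i (Y × S) = S`. If `N = E ⊕ F` with `S → E` left minimal, then
`Y × S → Y × E` and `Y × S ↠ S → E` are left minimal too, and `i` compares them, so `Y × E ≅ E`.
Hence `M ≅ Y × E × F ≅ E × F ≅ N`.
-/

section PPType

variable {R A B C : Type*} [Ring R] [AddCommGroup A] [Module R A] [AddCommGroup B] [Module R B]
  [AddCommGroup C] [Module R C]

/-- A finite system `∑ j, coeff i j • x j = const i` of `R`-linear equations in the unknowns `x j`,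
with constants in `A`. -/
structure LinearSystem (R A : Type*) where
  numEqs : ℕ
  numVars : ℕ
  coeff : Fin numEqs → Fin numVars → R
  const : Fin numEqs → A

/-- The positive-primitive type of a linear map `u : A → B`, encoded as the set of finite linear
systems over `A` that become solvable in `B` once `u` is applied to their constants. -/
def ppType (u : A →ₗ[R] B) : Set (LinearSystem R A) :=
  {L | ∃ x : Fin L.numVars → B, ∀ i, ∑ j, L.coeff i j • x j = u (L.const i)}

theorem ppType_subset_comp (u : A →ₗ[R] B) (t : B →ₗ[R] C) : ppType u ⊆ ppType (t ∘ₗ u) := by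
  rintro L ⟨x, hx⟩
  exact ⟨t ∘ x, fun i => by simp [← hx i]⟩

end PPType

section IsPureMap

variable {R : Type u} [Ring R] {M N : Type v} [AddCommGroup M] [Module R M] [AddCommGroup N]
  [Module R N] {f : M →ₗ[R] N}

theorem isPureMap_iff_ppType_subset :
    IsPureMap R f ↔ ppType f ⊆ ppType (LinearMap.id : M →ₗ[R] M) :=
  ⟨fun hf L hL => hf L.numEqs L.numVars L.coeff L.const hL,
    fun hf m k a b h => @hf ⟨m, k, a, b⟩ h⟩

theorem IsPureMap.injective (hf : IsPureMap R f) : Function.Injective f := by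
  rw [injective_iff_map_eq_zero]
  intro b hb
  -- Solvability of the system `0 = b` without unknowns means `b = 0`.
  obtain ⟨x, hx⟩ := hf 1 0 (fun _ => Fin.elim0) (fun _ => b) ⟨Fin.elim0, fun _ => by simp [hb]⟩
  simpa using (hx 0).symm

theorem PureInjective.exists_leftInverse (hM : PureInjective R M) (hf : IsPureMap R f) :
    ∃ g : N →ₗ[R] M, g ∘ₗ f = LinearMap.id :=
  hM N f hf.injective hf

end IsPureMap

section Extension

variable {R : Type u} [Ring R] {A : Type*} {B C : Type v} [AddCommGroup A] [Module R A]
  [AddCommGroup B] [Module R B] [AddCommGroup C] [Module R C]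

theorem isPureMap_pushout_inl {u : A →ₗ[R] B} {v : A →ₗ[R] C} (h : ppType u ⊆ ppType v) :
    IsPureMap R ((LinearMap.range (v.prod (-u))).mkQ ∘ₗ LinearMap.inl R C B) := by
  set W := LinearMap.range (v.prod (-u))
  rintro m k a b ⟨x, hx⟩
  choose y hy using fun j => W.mkQ_surjective (x j)
  have hmem (i) : ∑ j, a i j • y j - (b i, 0) ∈ W := by
    rw [← Submodule.ker_mkQ W, LinearMap.mem_ker, map_sub, map_sum, sub_eq_zero]
    simp only [map_smul, hy]
    exact hx i
  choose z hz using hmem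
  have hz_fst (i) : v (z i) = ∑ j, a i j • (y j).1 - b i := by
    simpa [Prod.fst_sum] using congrArg Prod.fst (hz i)
  have hz_snd (i) : -u (z i) = ∑ j, a i j • (y j).2 := by
    simpa [Prod.snd_sum] using congrArg Prod.snd (hz i)
  obtain ⟨w, hw⟩ : ∃ w : Fin k → C, ∀ i, ∑ j, a i j • w j = v (z i) :=
    @h ⟨m, k, a, z⟩ ⟨fun j => -(y j).2, fun i => by simp [← hz_snd i]⟩
  exact ⟨fun j => (y j).1 - w j, fun i => by simp [smul_sub, hw i, hz_fst i]⟩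

theorem PureInjective.exists_comp_eq (hC : PureInjective R C) {u : A →ₗ[R] B} {v : A →ₗ[R] C}
    (h : ppType u ⊆ ppType v) : ∃ r : B →ₗ[R] C, r ∘ₗ u = v := by
  set W := LinearMap.range (v.prod (-u))
  obtain ⟨ρ, hρ⟩ := hC.exists_leftInverse (isPureMap_pushout_inl h)
  refine ⟨ρ ∘ₗ W.mkQ ∘ₗ LinearMap.inr R C B, LinearMap.ext fun a => ?_⟩
  have hglue : W.mkQ (0, u a) = W.mkQ (v a, 0) := by
    rw [← sub_eq_zero, ← map_sub, ← LinearMap.mem_ker, Submodule.ker_mkQ]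
    exact ⟨-a, by simp⟩
  simpa [hglue] using LinearMap.congr_fun hρ (v a)

end Extension

section Limit

open Filter

section Germ

variable {R A B I : Type*} [Ring R] [AddCommGroup A] [Module R A] [AddCommGroup B] [Module R B]

/-- The linear map into the reduced power of `B` along a filter that is induced by a family of
linear maps into `B`. -/
def germMap (l : Filter I) (s : I → A →ₗ[R] B) : A →ₗ[R] l.Germ B where
  toFun a := ((fun i => s i a : I → B) : l.Germ B)
  map_add' a a' := by simp only [map_add]; rfl
  map_smul' r a := by simp only [map_smul]; rfl

/-- Łoś's theorem for positive-primitive formulas in a reduced power. -/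
theorem mem_ppType_germMap_iff {l : Filter I} [l.NeBot] {s : I → A →ₗ[R] B}
    {L : LinearSystem R A} : L ∈ ppType (germMap l s) ↔ ∀ᶠ i in l, L ∈ ppType (s i) := by
  have solves_iff (y : Fin L.numVars → I → B) :
      (∀ i, ∑ j, L.coeff i j • (y j : l.Germ B) = germMap l s (L.const i)) ↔
        ∀ᶠ p in l, ∀ i, ∑ j, L.coeff i j • y j p = s p (L.const i) := by
    rw [eventually_all]
    refine forall_congr' fun i => ?_
    have hsum : ∑ j, L.coeff i j • (y j : l.Germ B) =
        ((∑ j, L.coeff i j • y j : I → B) : l.Germ B) :=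
      (map_sum (Germ.coeAddHom l) (fun j => L.coeff i j • y j) Finset.univ).symm
    rw [hsum]
    exact Germ.coe_eq.trans (by simp [EventuallyEq])
  constructor
  · rintro ⟨x, hx⟩
    choose y hy using fun j => Quotient.exists_rep (x j)
    obtain rfl : (fun j => (y j : l.Germ B)) = x := funext hy
    exact ((solves_iff y).1 hx).mono fun p hp => ⟨fun j => y j p, hp⟩
  · intro h
    obtain ⟨y, hy⟩ := h.choice
    exact ⟨_, (solves_iff fun j p => y p j).2 hy⟩

end Germ

variable {R : Type u} [Ring R] {A : Type*} {I N : Type v} [AddCommGroup A] [Module R A]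
  [AddCommGroup N] [Module R N]

theorem isPureMap_germMap_id (l : Filter I) [l.NeBot] :
    IsPureMap R (germMap l fun _ => (LinearMap.id : N →ₗ[R] N)) :=
  isPureMap_iff_ppType_subset.2 fun _ hL => eventually_const.1 (mem_ppType_germMap_iff.1 hL)

theorem PureInjective.exists_limit (hN : PureInjective R N) (l : Filter I) [l.NeBot]
    (s : I → A →ₗ[R] N) :
    ∃ t : A →ₗ[R] N, (∀ a n, (∀ᶠ i in l, s i a = n) → t a = n) ∧
      ∀ L, (∀ᶠ i in l, L ∈ ppType (s i)) → L ∈ ppType t := by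
  obtain ⟨ρ, hρ⟩ := hN.exists_leftInverse (isPureMap_germMap_id (R := R) l)
  refine ⟨ρ ∘ₗ germMap l s, fun a n h => ?_, fun L hL =>
    ppType_subset_comp _ ρ (mem_ppType_germMap_iff.2 hL)⟩
  calc ρ (germMap l s a) = ρ (germMap l (fun _ => LinearMap.id) n) :=
        congrArg ρ (Germ.coe_eq.2 h)
    _ = n := LinearMap.congr_fun hρ n

end Limit

section IsLeftMinimal

variable {R A B D E Y : Type*} [Ring R] [AddCommGroup A] [Module R A] [AddCommGroup B] [Module R B]
  [AddCommGroup D] [Module R D] [AddCommGroup E] [Module R E] [AddCommGroup Y] [Module R Y]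

/-- A linear map `φ : A → E` is left minimal, in the sense of Auslander and Reiten, if every
endomorphism of `E` that fixes `φ` is an automorphism. -/
def IsLeftMinimal (φ : A →ₗ[R] E) : Prop :=
  ∀ t : Module.End R E, t ∘ₗ φ = φ → IsUnit t

theorem isLeftMinimal_of_forall_exists_leftInverse {φ : A →ₗ[R] E}
    (h : ∀ t : Module.End R E, t ∘ₗ φ = φ → ∃ r : Module.End R E, r * t = 1) :
    IsLeftMinimal φ := by
  intro t ht
  obtain ⟨r, hrt⟩ := h t ht
  have hr : r ∘ₗ φ = φ := by
    calc r ∘ₗ φ = (r * t) ∘ₗ φ := by rw [Module.End.mul_eq_comp, LinearMap.comp_assoc, ht]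
      _ = φ := by rw [hrt]; rfl
  obtain ⟨r', hr'r⟩ := h r hr
  exact ⟨⟨t, r, left_inv_eq_right_inv hr'r hrt ▸ hr'r, hrt⟩, rfl⟩

namespace IsLeftMinimal

theorem comp_surjective {φ : A →ₗ[R] E} (hφ : IsLeftMinimal φ) {p : B →ₗ[R] A}
    (hp : Function.Surjective p) : IsLeftMinimal (φ ∘ₗ p) :=
  fun t ht => hφ t ((LinearMap.cancel_right hp).1 ht)

theorem id_prodMap {φ : A →ₗ[R] E} (hφ : IsLeftMinimal φ) :
    IsLeftMinimal ((LinearMap.id : Y →ₗ[R] Y).prodMap φ) := by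
  intro t ht
  have htφ (y : Y) (a : A) : t (y, φ a) = (y, φ a) := LinearMap.congr_fun ht (y, a)
  let b : Module.End R E := LinearMap.snd R Y E ∘ₗ t ∘ₗ LinearMap.inr R Y E
  let c : E →ₗ[R] Y := LinearMap.fst R Y E ∘ₗ t ∘ₗ LinearMap.inr R Y E
  have hb : Function.Bijective b :=
    (Module.End.isUnit_iff b).1 (hφ b (LinearMap.ext fun a => by simp [b, htφ]))
  have triangular (y : Y) (x : E) : t (y, x) = (y + c x, b x) := by
    have h : t (y, 0) = (y, 0) := by simpa using htφ y 0
    calc t (y, x) = t (y, 0) + t (0, x) := by simp [← map_add]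
      _ = (y + c x, b x) := by rw [h]; ext <;> simp [b, c]
  rw [Module.End.isUnit_iff]
  constructor
  · rw [injective_iff_map_eq_zero]
    rintro ⟨y, x⟩ h
    obtain ⟨hy, hx⟩ := Prod.mk_eq_zero.1 ((triangular y x).symm.trans h)
    obtain rfl : x = 0 := (map_eq_zero_iff b hb.1).1 hx
    simpa using hy
  · rintro ⟨y, x⟩
    obtain ⟨x, rfl⟩ := hb.2 x
    exact ⟨(y - c x, x), by simp [triangular]⟩

theorem nonempty_linearEquiv {φ : A →ₗ[R] D} {ψ : A →ₗ[R] E} (hφ : IsLeftMinimal φ)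
    (hψ : IsLeftMinimal ψ) {α : D →ₗ[R] E} {β : E →ₗ[R] D} (hα : α ∘ₗ φ = ψ) (hβ : β ∘ₗ ψ = φ) :
    Nonempty (D ≃ₗ[R] E) := by
  have hβα : Function.Bijective (β ∘ₗ α) :=
    (Module.End.isUnit_iff _).1 (hφ _ (by rw [LinearMap.comp_assoc, hα, hβ]))
  have hαβ : Function.Bijective (α ∘ₗ β) :=
    (Module.End.isUnit_iff _).1 (hψ _ (by rw [LinearMap.comp_assoc, hβ, hα]))
  rw [LinearMap.coe_comp] at hβα hαβ
  exact ⟨.ofBijective α ⟨hβα.1.of_comp, hαβ.2.of_comp⟩⟩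

end IsLeftMinimal

end IsLeftMinimal

section MinimalSummand

variable {R : Type u} [Ring R] {A : Type*} {N : Type v} [AddCommGroup A] [Module R A]
  [AddCommGroup N] [Module R N]

/-- An invariant measuring how far an endomorphism `t` collapses `N`; the projections onto minimal
summands are found by maximizing it. The pp-type of `t` grows as more of `N` is collapsed, and the
set of fixed points breaks ties so as to force idempotence. -/
def collapseRank (t : Module.End R N) : Set (LinearSystem R N) ×ₗ Set N :=
  toLex (ppType t, Function.fixedPoints t)

theorem collapseRank_le_iff {s t : Module.End R N} :
    collapseRank s ≤ collapseRank t ↔ ppType s ⊆ ppType t ∧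
      (ppType s = ppType t → Function.fixedPoints s ⊆ Function.fixedPoints t) :=
  Prod.Lex.toLex_le_toLex'

theorem PureInjective.exists_forall_collapseRank_le (hN : PureInjective R N) {φ : A →ₗ[R] N}
    {I : Type v} [Preorder I] [IsDirectedOrder I] [Nonempty I] {s : I → Module.End R N}
    (hs : Monotone fun i => collapseRank (s i)) (hsφ : ∀ i, s i ∘ₗ φ = φ) :
    ∃ t : Module.End R N, t ∘ₗ φ = φ ∧ ∀ i, collapseRank (s i) ≤ collapseRank t := by
  obtain ⟨t, ht_val, ht_ppType⟩ := hN.exists_limit Filter.atTop s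
  have ppType_mono {i j} (hij : i ≤ j) : ppType (s i) ⊆ ppType (s j) :=
    (collapseRank_le_iff.1 (hs hij)).1
  have ppType_le (i) : ppType (s i) ⊆ ppType t := fun L hL =>
    ht_ppType L <| (Filter.eventually_ge_atTop i).mono fun _ hij => ppType_mono hij hL
  have fixedPoints_le (i) (h : ppType (s i) = ppType t) (n) (hn : s i n = n) : t n = n := by
    refine ht_val n n ((Filter.eventually_ge_atTop i).mono fun j hij => ?_)
    have hij_eq : ppType (s i) = ppType (s j) := (ppType_mono hij).antisymm (h ▸ ppType_le j)
    exact (collapseRank_le_iff.1 (hs hij)).2 hij_eq hn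
  have htφ (a) : t (φ a) = φ a :=
    ht_val _ _ (.of_forall fun i => LinearMap.congr_fun (hsφ i) a)
  exact ⟨t, LinearMap.ext htφ, fun i => collapseRank_le_iff.2 ⟨ppType_le i, fixedPoints_le i⟩⟩

theorem PureInjective.exists_maximalFor_collapseRank (hN : PureInjective R N) (φ : A →ₗ[R] N) :
    ∃ s : Module.End R N, MaximalFor (fun t => t ∘ₗ φ = φ) collapseRank s := by
  let T := {t : Module.End R N // t ∘ₗ φ = φ}
  let : Preorder T := .lift fun t => collapseRank t.1
  have : Nonempty T := ⟨⟨LinearMap.id, LinearMap.id_comp φ⟩⟩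
  obtain ⟨s, hs⟩ : ∃ s : T, IsMax s := by
    refine zorn_le_nonempty fun c hc hne => ?_
    have : Nonempty c := hne.to_subtype
    have : IsDirectedOrder c := hc.directedOn.isDirectedOrder
    obtain ⟨t, htφ, ht⟩ := hN.exists_forall_collapseRank_le (s := fun i : c => i.1.1)
      (fun _ _ hij => hij) fun i => i.1.2
    exact ⟨⟨t, htφ⟩, fun i hi => ht ⟨i, hi⟩⟩
  exact ⟨s, s.2, fun t ht h => hs (b := ⟨t, ht⟩) h⟩

theorem PureInjective.exists_comp_comp_eq_of_maximalFor (hN : PureInjective R N) {φ : A →ₗ[R] N}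
    {s t : Module.End R N} (hs : MaximalFor (fun t => t ∘ₗ φ = φ) collapseRank s)
    (ht : t ∘ₗ φ = φ) : ∃ r : Module.End R N, r ∘ₗ φ = φ ∧ r ∘ₗ t ∘ₗ s = s := by
  have htsφ : (t ∘ₗ s) ∘ₗ φ = φ := by rw [LinearMap.comp_assoc, hs.1, ht]
  have hts : ppType (t ∘ₗ s) ⊆ ppType s := by
    by_contra hlt
    have hle : collapseRank s ≤ collapseRank (t ∘ₗ s) :=
      collapseRank_le_iff.2 ⟨ppType_subset_comp s t, fun h => absurd h.ge hlt⟩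
    exact hlt (collapseRank_le_iff.1 (hs.2 htsφ hle)).1
  obtain ⟨r, hr⟩ := hN.exists_comp_eq hts
  refine ⟨r, ?_, hr⟩
  calc r ∘ₗ φ = (r ∘ₗ t ∘ₗ s) ∘ₗ φ := by rw [LinearMap.comp_assoc, htsφ]
    _ = φ := by rw [hr, hs.1]

theorem PureInjective.isIdempotentElem_of_maximalFor (hN : PureInjective R N) {φ : A →ₗ[R] N}
    {s : Module.End R N} (hs : MaximalFor (fun t => t ∘ₗ φ = φ) collapseRank s) :
    IsIdempotentElem s := by
  obtain ⟨r, hrφ, hrss⟩ := hN.exists_comp_comp_eq_of_maximalFor hs hs.1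
  have hr (n) : r (s (s n)) = s n := LinearMap.congr_fun hrss n
  have hle : collapseRank s ≤ collapseRank (r ∘ₗ s) := by
    refine collapseRank_le_iff.2 ⟨ppType_subset_comp s r, fun _ n (hn : s n = n) => ?_⟩
    calc r (s n) = r (s (s n)) := by rw [hn, hn]
      _ = n := by rw [hr, hn]
  have hrsφ : (r ∘ₗ s) ∘ₗ φ = φ := by rw [LinearMap.comp_assoc, hs.1, hrφ]
  have hge := collapseRank_le_iff.1 (hs.2 hrsφ hle)
  have hfix : Function.fixedPoints (r ∘ₗ s) ⊆ Function.fixedPoints s :=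
    hge.2 (hge.1.antisymm (ppType_subset_comp s r))
  exact LinearMap.ext fun n => hfix (hr n)

theorem PureInjective.exists_isCompl_isLeftMinimal (hN : PureInjective R N) (φ : A →ₗ[R] N) :
    ∃ E F : Submodule R N, IsCompl E F ∧
      ∃ φ' : A →ₗ[R] E, E.subtype ∘ₗ φ' = φ ∧ IsLeftMinimal φ' := by
  obtain ⟨s, hs⟩ := hN.exists_maximalFor_collapseRank φ
  have hss := hN.isIdempotentElem_of_maximalFor hs
  let E := LinearMap.range s
  let φ' : A →ₗ[R] E := s.rangeRestrict ∘ₗ φ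
  have hφ' : E.subtype ∘ₗ φ' = φ := hs.1
  have hsE (x : E) : s x = x := (LinearMap.IsIdempotentElem.mem_range_iff hss).1 x.2
  refine ⟨E, LinearMap.ker s, LinearMap.IsIdempotentElem.isCompl hss, φ', hφ',
    isLeftMinimal_of_forall_exists_leftInverse fun t ht => ?_⟩
  have htφ : (E.subtype ∘ₗ t ∘ₗ s.rangeRestrict) ∘ₗ φ = φ := by
    calc _ = E.subtype ∘ₗ t ∘ₗ φ' := rfl
      _ = φ := by rw [ht, hφ']
  obtain ⟨r, -, hr⟩ := hN.exists_comp_comp_eq_of_maximalFor hs htφ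
  refine ⟨s.rangeRestrict ∘ₗ r ∘ₗ E.subtype, LinearMap.ext fun x => Subtype.ext ?_⟩
  have hrt : r (t x) = x := by
    have hsx : s.rangeRestrict x = x := Subtype.ext (hsE x)
    simpa [hsx, hsE] using LinearMap.congr_fun hr x
  simp [hrt, hsE]

end MinimalSummand

section CantorBernstein

theorem exists_map_top_prod_eq {R Y N : Type*} [Ring R] [AddCommGroup Y] [Module R Y]
    [AddCommGroup N] [Module R N] (i : Y × N →ₗ[R] N) :
    ∃ S : Submodule R N, (Submodule.prod ⊤ S).map i = S :=
  ⟨_, OrderHom.map_lfp ⟨fun S => (Submodule.prod ⊤ S).map i, fun _ _ h =>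
    Submodule.map_mono (Submodule.prod_mono le_rfl h)⟩⟩

variable {R : Type u} [Ring R] {N : Type v} [AddCommGroup N] [Module R N]

theorem PureInjective.nonempty_prod_linearEquiv_self (hN : PureInjective R N) {Y : Type*}
    [AddCommGroup Y] [Module R Y] {i : Y × N →ₗ[R] N} {p : N →ₗ[R] Y × N}
    (hpi : p ∘ₗ i = LinearMap.id) : Nonempty ((Y × N) ≃ₗ[R] N) := by
  obtain ⟨S, hS⟩ := exists_map_top_prod_eq i
  obtain ⟨E, F, hEF, φ, hφS, hφ⟩ := hN.exists_isCompl_isLeftMinimal S.subtype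
  have hφ_coe (x : S) : (φ x : N) = x := LinearMap.congr_fun hφS x
  let π : N →ₗ[R] E := E.projectionOnto F hEF
  have hπ (x : S) : π x = φ x := by
    rw [← hφ_coe]; exact Submodule.projectionOnto_apply_left hEF (φ x)
  have hi_mem (z : Y × S) : i (z.1, z.2) ∈ S := hS.le ⟨_, by simp, rfl⟩
  let iS : Y × S →ₗ[R] S :=
    (i ∘ₗ LinearMap.id.prodMap S.subtype).codRestrict S hi_mem
  have hiS : Function.Surjective iS := by
    rintro ⟨x, hx⟩
    obtain ⟨⟨y, x'⟩, ⟨-, hx'⟩, rfl⟩ := hS.ge hx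
    exact ⟨(y, ⟨x', hx'⟩), rfl⟩
  let α : Y × E →ₗ[R] E := π ∘ₗ i ∘ₗ LinearMap.id.prodMap E.subtype
  let β : E →ₗ[R] Y × E := LinearMap.id.prodMap π ∘ₗ p ∘ₗ E.subtype
  have hα : α ∘ₗ LinearMap.id.prodMap φ = φ ∘ₗ iS := by
    refine LinearMap.ext fun z => ?_
    calc (α ∘ₗ LinearMap.id.prodMap φ) z = π (i (z.1, (φ z.2 : N))) := rfl
      _ = π (iS z) := by rw [hφ_coe]; rfl
      _ = φ (iS z) := hπ (iS z)
  have hβ : β ∘ₗ φ ∘ₗ iS = LinearMap.id.prodMap φ := by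
    refine LinearMap.ext fun z => ?_
    have hp : p (iS z) = (z.1, (z.2 : N)) := LinearMap.congr_fun hpi (z.1, (z.2 : N))
    simp [β, hφ_coe, hp, hπ]
  obtain ⟨e⟩ := hφ.id_prodMap.nonempty_linearEquiv (hφ.comp_surjective hiS) hα hβ
  let eN : (E × F) ≃ₗ[R] N := E.prodEquivOfIsCompl F hEF
  exact ⟨(LinearEquiv.refl R Y).prodCongr eN.symm ≪≫ₗ (LinearEquiv.prodAssoc R Y E F).symm ≪≫ₗ
    e.prodCongr (.refl R F) ≪≫ₗ eN⟩

theorem PureInjective.nonempty_linearEquiv_of_leftInverses (hN : PureInjective R N) {M : Type*}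
    [AddCommGroup M] [Module R M] {f : M →ₗ[R] N} {f' : N →ₗ[R] M} (hf : f' ∘ₗ f = LinearMap.id)
    {g : N →ₗ[R] M} {g' : M →ₗ[R] N} (hg : g' ∘ₗ g = LinearMap.id) : Nonempty (M ≃ₗ[R] N) := by
  let e : M ≃ₗ[R] LinearMap.ker g' × N :=
    ((LinearMap.exact_subtype_ker_map g').splitSurjectiveEquiv
      (Submodule.injective_subtype _) ⟨g, hg⟩).1
  have hretract : (e.toLinearMap ∘ₗ f') ∘ₗ f ∘ₗ e.symm.toLinearMap = LinearMap.id :=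
    LinearMap.ext fun z => by
      calc e (f' (f (e.symm z))) = e (e.symm z) := congrArg e (LinearMap.congr_fun hf _)
        _ = z := e.apply_symm_apply z
  exact (hN.nonempty_prod_linearEquiv_self hretract).map e.trans

theorem pureInjective_bumby_general {M : Type v} [AddCommGroup M] [Module R M]
    (hM : PureInjective R M) (hN : PureInjective R N) {f : M →ₗ[R] N} (hf : IsPureMap R f)
    {g : N →ₗ[R] M} (hg : IsPureMap R g) : Nonempty (M ≃ₗ[R] N) := by
  obtain ⟨f', hf'⟩ := hM.exists_leftInverse hf
  obtain ⟨g', hg'⟩ := hN.exists_leftInverse hg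
  exact hN.nonempty_linearEquiv_of_leftInverses hf' hg'

end CantorBernstein

/-- Two pure-injective modules that purely embed into each other are isomorphic. -/
theorem pureInjective_bumby (R : Type u) [Ring R] (M N : Type u)
    [AddCommGroup M] [Module R M] [AddCommGroup N] [Module R N]
    (hM : PureInjective R M) (hN : PureInjective R N)
    (f : M →ₗ[R] N) (hf : Function.Injective f) (hfp : IsPureMap R f)
    (g : N →ₗ[R] M) (hg : Function.Injective g) (hgp : IsPureMap R g) :
    Nonempty (M ≃ₗ[R] N) :=
  pureInjective_bumby_general hM hN hfp hgp
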